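/- There exist a constant C > 0 and x₀ ≥ 1 such that for all real x ≥ x₀, |E(x) − 2·x^{1/2}·Q(√x)| ≤ C·x^{1/2}, where E(x) = S(x) − (π²/2)x and Q(√x) = x^{−1/2}·(S(√x; 0) − (2^{3/2}π/3)·x). -/

import Mathlib

open Real

/-- `r₂(m)`: the number of representations of `m` as a sum of two squares of integers. -/
noncomputable def r2 (m : ℕ) : ℕ :=
  Set.ncard {p : ℤ × ℤ | p.1 ^ 2 + p.2 ^ 2 = (m : ℤ)}

/-- `S(x)`: the number of integer points `(a,b,w)` with `(a²+b²)² + w² < x`. -/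
noncomputable def S (x : ℝ) : ℕ :=
  Set.ncard {p : ℤ × ℤ × ℤ |
    (((p.1 : ℝ) ^ 2 + (p.2.1 : ℝ) ^ 2) ^ 2 + (p.2.2 : ℝ) ^ 2) < x}

/-- `E(x) = S(x) - (π²/2)·x`. -/
noncomputable def E (x : ℝ) : ℝ := (S x : ℝ) - (Real.pi ^ 2 / 2) * x

/-- `S(√x; 0) = √2·x^{1/4}·Σ_{m ∈ ℕ, m ≤ √x} r₂(m)·(√x − m)^{1/2}`. -/
noncomputable def Sx0 (x : ℝ) : ℝ :=
  Real.sqrt 2 * x ^ ((1 : ℝ) / 4) *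
    ∑ m ∈ Finset.range (⌊Real.sqrt x⌋₊ + 1),
      (r2 m : ℝ) * (Real.sqrt x - m) ^ ((1 : ℝ) / 2)

/-- `Q(√x) = x^{−1/2}·(S(√x; 0) − (2^{3/2}π/3)·x)`. -/
noncomputable def Q (x : ℝ) : ℝ :=
  x ^ (-(1 : ℝ) / 2) * (Sx0 x - 2 ^ ((3 : ℝ) / 2) * Real.pi / 3 * x)

/-!
Counting `w` first gives `2 * √(x - |p| ^ 4) + O(1)` for each `p ∈ ℤ²` with `|p| ^ 4 < x`, and there
are `O(√x)` such `p`. So, up to an admissible error, `E x - 2 * √x * Q x` is `-2 * √x` times the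
discrepancy between the lattice sum `∑ g (|p| ^ 2 / √x)` and `π * √x * ∫ g`, where
`g u = √2 * √(1 - u) - √(1 - u ^ 2)`. The point is that this discrepancy is bounded: on `[0, 1]`,
`g u = √(1 - u) ^ 3 / (√2 + √(1 + u))` is convex and vanishes at `1` together with its derivative,
hence is a positive mixture `∫ g'' s * max (s - u) 0 ds` of Riesz kernels, and the lattice sum of
`max (T - |p| ^ 2) 0` is `π / 2 * T ^ 2 + O(T)`. Summing over one coordinate, with error `O(√T)` on
each line, reduces the latter to `∑ √(T - a ^ 2) ^ 3` over `a ∈ ℤ`, which is handled by the same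
transfer principle for the kernel `√(1 - u) ^ 3`.
-/

open MeasureTheory Set

/-! ### Convex kernels as mixtures of Riesz kernels -/

/-- A nonnegative, antitone, convex function `f` on `[0, 1]`, continuous together with its first
derivative `f'` and with second derivative `f''` on `(0, 1)`, where `f''` may blow up at `0`
and `1`. -/
structure ConvexAntitone (f f' f'' : ℝ → ℝ) : Prop where
  continuousOn : ContinuousOn f (Icc 0 1)
  continuousOn_deriv : ContinuousOn f' (Icc 0 1)
  hasDerivAt : ∀ u ∈ Ioo (0 : ℝ) 1, HasDerivAt f (f' u) u
  hasDerivAt_deriv : ∀ u ∈ Ioo (0 : ℝ) 1, HasDerivAt f' (f'' u) u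
  deriv2_nonneg : ∀ u ∈ Ioo (0 : ℝ) 1, 0 ≤ f'' u
  deriv_nonpos : ∀ u ∈ Ioo (0 : ℝ) 1, f' u ≤ 0
  nonneg : ∀ u ∈ Ioo (0 : ℝ) 1, 0 ≤ f u

/-- A convex summation kernel on `[0, ∞)`: it vanishes on `[1, ∞)`, to second order at `1`. Such
kernels are mixtures of the Riesz kernels `u ↦ max (s - u) 0`. -/
structure ConvexKernel (k k' k'' : ℝ → ℝ) : Prop extends ConvexAntitone k k' k'' where
  deriv_one : k' 1 = 0
  eq_zero_of_one_le : ∀ u, 1 ≤ u → k u = 0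

section Kernel

variable {f f' f'' g g' g'' k k' k'' : ℝ → ℝ}

lemma ConvexAntitone.mul (hf : ConvexAntitone f f' f'') (hg : ConvexAntitone g g' g'') :
    ConvexAntitone (fun u ↦ f u * g u) (fun u ↦ f' u * g u + f u * g' u)
      (fun u ↦ (f'' u * g u + f' u * g' u) + (f' u * g' u + f u * g'' u)) where
  continuousOn := hf.continuousOn.mul hg.continuousOn
  continuousOn_deriv := (hf.continuousOn_deriv.mul hg.continuousOn).add
    (hf.continuousOn.mul hg.continuousOn_deriv)
  hasDerivAt u hu := (hf.hasDerivAt u hu).mul (hg.hasDerivAt u hu)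
  hasDerivAt_deriv u hu := ((hf.hasDerivAt_deriv u hu).mul (hg.hasDerivAt u hu)).add
    ((hf.hasDerivAt u hu).mul (hg.hasDerivAt_deriv u hu))
  nonneg u hu := mul_nonneg (hf.nonneg u hu) (hg.nonneg u hu)
  deriv_nonpos u hu := add_nonpos
    (mul_nonpos_of_nonpos_of_nonneg (hf.deriv_nonpos u hu) (hg.nonneg u hu))
    (mul_nonpos_of_nonneg_of_nonpos (hf.nonneg u hu) (hg.deriv_nonpos u hu))
  deriv2_nonneg u hu := by
    have hmid := mul_nonneg_of_nonpos_of_nonpos (hf.deriv_nonpos u hu) (hg.deriv_nonpos u hu)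
    exact add_nonneg (add_nonneg (mul_nonneg (hf.deriv2_nonneg u hu) (hg.nonneg u hu)) hmid)
      (add_nonneg hmid (mul_nonneg (hf.nonneg u hu) (hg.deriv2_nonneg u hu)))

namespace ConvexKernel

lemma mul (hk : ConvexKernel k k' k'') (hg : ConvexAntitone g g' g'') :
    ConvexKernel (fun u ↦ k u * g u) (fun u ↦ k' u * g u + k u * g' u)
      (fun u ↦ (k'' u * g u + k' u * g' u) + (k' u * g' u + k u * g'' u)) where
  toConvexAntitone := hk.toConvexAntitone.mul hg
  deriv_one := by simp [hk.deriv_one, hk.eq_zero_of_one_le 1 le_rfl]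
  eq_zero_of_one_le u hu := by simp [hk.eq_zero_of_one_le u hu]

lemma intervalIntegrable_deriv2 (hk : ConvexKernel k k' k'') :
    IntervalIntegrable k'' volume 0 1 :=
  intervalIntegral.intervalIntegrable_deriv_of_nonneg (g := k')
    (by simpa using hk.continuousOn_deriv) (by simpa using hk.hasDerivAt_deriv)
    (by simpa using hk.deriv2_nonneg)

lemma intervalIntegrable_deriv2_mul (hk : ConvexKernel k k' k'') {M : ℝ → ℝ}
    (hM : Continuous M) : IntervalIntegrable (fun s ↦ k'' s * M s) volume 0 1 :=
  hk.intervalIntegrable_deriv2.mul_continuousOn hM.continuousOn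

lemma integral_deriv2 (hk : ConvexKernel k k' k'') : ∫ s in (0 : ℝ)..1, k'' s = -k' 0 := by
  rw [intervalIntegral.integral_eq_sub_of_hasDerivAt_of_le zero_le_one hk.continuousOn_deriv
    hk.hasDerivAt_deriv hk.intervalIntegrable_deriv2, hk.deriv_one, zero_sub]

lemma integral_deriv2_mul_sq (hk : ConvexKernel k k' k'') :
    ∫ s in (0 : ℝ)..1, k'' s * s ^ 2 = 2 * ∫ s in (0 : ℝ)..1, k s := by
  have hint : IntervalIntegrable (fun s ↦ k'' s * s ^ 2) volume 0 1 :=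
    hk.intervalIntegrable_deriv2_mul (by fun_prop)
  have hk_int : IntervalIntegrable (fun s ↦ 2 * k s) volume 0 1 :=
    (hk.continuousOn.intervalIntegrable_of_Icc zero_le_one).const_mul 2
  have hcont := hk.continuousOn
  have hcont' := hk.continuousOn_deriv
  have hderiv : ∀ s ∈ Ioo (0 : ℝ) 1, HasDerivAt (fun s ↦ s ^ 2 * k' s - 2 * s * k s)
      (k'' s * s ^ 2 - 2 * k s) s := fun s hs ↦ by
    refine (((hasDerivAt_pow 2 s).mul (hk.hasDerivAt_deriv s hs)).sub
      (((hasDerivAt_id s).const_mul 2).mul (hk.hasDerivAt s hs))).congr_deriv ?_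
    simp only [id]
    ring
  have hFTC := intervalIntegral.integral_eq_sub_of_hasDerivAt_of_le zero_le_one
    (by fun_prop) hderiv (hint.sub hk_int)
  rw [intervalIntegral.integral_sub hint hk_int, intervalIntegral.integral_const_mul,
    hk.deriv_one, hk.eq_zero_of_one_le 1 le_rfl] at hFTC
  linarith

lemma integral_deriv2_mul_sub (hk : ConvexKernel k k' k'') {a : ℝ} (ha : a ∈ Icc (0 : ℝ) 1) :
    ∫ s in a..1, k'' s * (s - a) = k a := by
  have hsub : Icc a 1 ⊆ Icc 0 1 := Icc_subset_Icc ha.1 le_rfl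
  have hcont := hk.continuousOn.mono hsub
  have hcont' := hk.continuousOn_deriv.mono hsub
  have hderiv : ∀ s ∈ Ioo a 1, HasDerivAt (fun s ↦ (s - a) * k' s - k s) (k'' s * (s - a)) s := by
    intro s hs
    have hs' : s ∈ Ioo (0 : ℝ) 1 := ⟨ha.1.trans_lt hs.1, hs.2⟩
    refine ((((hasDerivAt_id s).sub_const a).mul (hk.hasDerivAt_deriv s hs')).sub
      (hk.hasDerivAt s hs')).congr_deriv ?_
    simp only [id]
    ring
  have hint : IntervalIntegrable (fun s ↦ k'' s * (s - a)) volume a 1 :=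
    (hk.intervalIntegrable_deriv2_mul (M := fun s ↦ s - a) (by fun_prop)).mono_set (by
      simpa [uIcc_of_le ha.2] using hsub)
  rw [intervalIntegral.integral_eq_sub_of_hasDerivAt_of_le ha.2 (by fun_prop) hderiv hint]
  simp [hk.deriv_one, hk.eq_zero_of_one_le 1 le_rfl]

lemma integral_deriv2_mul_max (hk : ConvexKernel k k' k'') {a : ℝ} (ha : 0 ≤ a) :
    ∫ s in (0 : ℝ)..1, k'' s * max (s - a) 0 = k a := by
  have hzero {b : ℝ} (hb : 0 ≤ b) (hba : b ≤ a) :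
      ∫ s in (0 : ℝ)..b, k'' s * max (s - a) 0 = 0 := by
    rw [intervalIntegral.integral_congr (g := fun _ ↦ 0), intervalIntegral.integral_zero]
    intro s hs
    rw [uIcc_of_le hb] at hs
    simp [max_eq_right (by linarith [hs.2] : s - a ≤ 0)]
  rcases le_total 1 a with h1 | h1
  · rw [hk.eq_zero_of_one_le a h1, hzero zero_le_one h1]
  have hint : IntervalIntegrable (fun s ↦ k'' s * max (s - a) 0) volume 0 1 :=
    hk.intervalIntegrable_deriv2_mul (by fun_prop)
  have ha01 : a ∈ uIcc (0 : ℝ) 1 := by rw [uIcc_of_le zero_le_one]; exact ⟨ha, h1⟩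
  rw [← intervalIntegral.integral_add_adjacent_intervals
      (hint.mono_set (uIcc_subset_uIcc_left ha01)) (hint.mono_set (uIcc_subset_uIcc_right ha01)),
    hzero ha le_rfl, zero_add, ← hk.integral_deriv2_mul_sub ⟨ha, h1⟩]
  refine intervalIntegral.integral_congr fun s hs ↦ ?_
  rw [uIcc_of_le h1] at hs
  simp [max_eq_left (by linarith [hs.1] : 0 ≤ s - a)]

lemma sum_eq_integral_riesz (hk : ConvexKernel k k' k'') {ι : Type*} {I : Finset ι} {m : ι → ℝ}
    (hm : ∀ i ∈ I, 0 ≤ m i) {R : ℝ} (hR : 0 < R) :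
    ∑ i ∈ I, k (m i / R) = R⁻¹ * ∫ s in (0 : ℝ)..1, k'' s * ∑ i ∈ I, max (s * R - m i) 0 := by
  have hscale (s : ℝ) (i : ι) : max (s - m i / R) 0 = R⁻¹ * max (s * R - m i) 0 := by
    rw [mul_max_of_nonneg _ _ (inv_nonneg.2 hR.le), mul_zero]
    congr 1
    field_simp
  calc ∑ i ∈ I, k (m i / R)
      = ∑ i ∈ I, ∫ s in (0 : ℝ)..1, k'' s * max (s - m i / R) 0 :=
        Finset.sum_congr rfl fun i hi ↦
          (hk.integral_deriv2_mul_max (div_nonneg (hm i hi) hR.le)).symm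
    _ = ∫ s in (0 : ℝ)..1, ∑ i ∈ I, k'' s * max (s - m i / R) 0 := by
        rw [intervalIntegral.integral_finsetSum]
        exact fun i _ ↦ hk.intervalIntegrable_deriv2_mul (by fun_prop)
    _ = R⁻¹ * ∫ s in (0 : ℝ)..1, k'' s * ∑ i ∈ I, max (s * R - m i) 0 := by
        rw [← intervalIntegral.integral_const_mul]
        simp only [hscale, Finset.mul_sum, mul_left_comm]

lemma abs_sum_sub_integral_le (hk : ConvexKernel k k' k'') {ι : Type*} {I : Finset ι}
    {m : ι → ℝ} (hm : ∀ i ∈ I, 0 ≤ m i) {R : ℝ} (hR : 0 < R) {M : ℝ → ℝ} (hM : Continuous M)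
    {D : ℝ} (hD : ∀ T ∈ Icc 0 R, |∑ i ∈ I, max (T - m i) 0 - M T| ≤ D) :
    |∑ i ∈ I, k (m i / R) - R⁻¹ * ∫ s in (0 : ℝ)..1, k'' s * M (s * R)| ≤ D / R * -k' 0 := by
  have hbound : |∫ s in (0 : ℝ)..1,
      (k'' s * ∑ i ∈ I, max (s * R - m i) 0 - k'' s * M (s * R))| ≤
        ∫ s in (0 : ℝ)..1, D * k'' s := by
    rw [← Real.norm_eq_abs]
    refine intervalIntegral.norm_integral_le_of_norm_le zero_le_one ?_
      (hk.intervalIntegrable_deriv2.const_mul D)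
    filter_upwards [Measure.ae_ne volume 1] with s hs_ne hs
    have hs0 : 0 ≤ k'' s := hk.deriv2_nonneg s ⟨hs.1, lt_of_le_of_ne hs.2 hs_ne⟩
    have hsR : s * R ∈ Icc 0 R :=
      ⟨mul_nonneg hs.1.le hR.le, mul_le_of_le_one_left hR.le hs.2⟩
    rw [← mul_sub, norm_mul, Real.norm_of_nonneg hs0, mul_comm]
    exact mul_le_mul_of_nonneg_right (hD _ hsR) hs0
  rw [intervalIntegral.integral_const_mul, hk.integral_deriv2] at hbound
  rw [hk.sum_eq_integral_riesz hm hR, ← mul_sub, ← intervalIntegral.integral_sub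
    (hk.intervalIntegrable_deriv2_mul (by fun_prop))
    (hk.intervalIntegrable_deriv2_mul (by fun_prop)), abs_mul, abs_of_pos (inv_pos.2 hR)]
  calc _ ≤ R⁻¹ * (D * -k' 0) := by gcongr
    _ = D / R * -k' 0 := by ring

end ConvexKernel

end Kernel

lemma hasDerivAt_sqrt_one_sub {u : ℝ} (hu : u < 1) :
    HasDerivAt (fun u : ℝ ↦ √(1 - u)) (-(1 / (2 * √(1 - u)))) u := by
  refine (((hasDerivAt_id u).const_sub 1).sqrt (sub_pos.2 hu).ne').congr_deriv ?_
  rw [id, neg_div]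

lemma hasDerivAt_sqrt_one_add {u : ℝ} (hu : -1 < u) :
    HasDerivAt (fun u : ℝ ↦ √(1 + u)) (1 / (2 * √(1 + u))) u :=
  ((hasDerivAt_id u).const_add 1).sqrt (neg_lt_iff_pos_add'.1 hu).ne'

lemma convexKernel_sqrt_one_sub_pow_three :
    ConvexKernel (fun u ↦ √(1 - u) ^ 3) (fun u ↦ -(3 / 2 * √(1 - u)))
      (fun u ↦ 3 / 4 / √(1 - u)) where
  continuousOn := by fun_prop
  continuousOn_deriv := by fun_prop
  hasDerivAt u hu := by
    have hpos : 0 < √(1 - u) := sqrt_pos.2 (sub_pos.2 hu.2)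
    refine ((hasDerivAt_sqrt_one_sub hu.2).pow 3).congr_deriv ?_
    field_simp
    norm_num
    ring
  hasDerivAt_deriv u hu := by
    refine ((hasDerivAt_sqrt_one_sub hu.2).const_mul (3 / 2)).neg.congr_deriv ?_
    ring
  nonneg u _ := by positivity
  deriv_nonpos u _ := by simp only [Left.neg_nonpos_iff]; positivity
  deriv2_nonneg u _ := by positivity
  deriv_one := by simp
  eq_zero_of_one_le u hu := by simp [sqrt_eq_zero_of_nonpos (sub_nonpos.2 hu)]

lemma convexAntitone_inv_sqrt_two_add_sqrt_one_add :
    ConvexAntitone (fun u ↦ (√2 + √(1 + u))⁻¹)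
      (fun u ↦ -(2 * √(1 + u) * (√2 + √(1 + u)) ^ 2)⁻¹)
      (fun u ↦ (4 * √(1 + u) ^ 3 * (√2 + √(1 + u)) ^ 2)⁻¹ +
        (2 * √(1 + u) ^ 2 * (√2 + √(1 + u)) ^ 3)⁻¹) where
  continuousOn := by
    have hne (u : ℝ) : √2 + √(1 + u) ≠ 0 := by positivity
    fun_prop (disch := simp [hne])
  continuousOn_deriv := by
    refine (ContinuousOn.inv₀ (by fun_prop) fun u hu ↦ ?_).neg
    have : 0 < √(1 + u) := sqrt_pos.2 (by linarith [hu.1])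
    positivity
  hasDerivAt u hu := by
    have hpos : 0 < √(1 + u) := sqrt_pos.2 (by linarith [hu.1])
    refine (((hasDerivAt_sqrt_one_add (by linarith [hu.1])).const_add √2).inv
      (by positivity)).congr_deriv ?_
    field_simp
  hasDerivAt_deriv u hu := by
    have hpos : 0 < √(1 + u) := sqrt_pos.2 (by linarith [hu.1])
    have hsqrt := hasDerivAt_sqrt_one_add (u := u) (by linarith [hu.1])
    refine (((hsqrt.const_mul 2).mul ((hsqrt.const_add √2).pow 2)).inv (by
      simp only [Pi.mul_apply, Pi.pow_apply]; positivity)).neg.congr_deriv ?_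
    simp only [Pi.mul_apply, Pi.pow_apply]
    field_simp
    ring
  nonneg u _ := by positivity
  deriv_nonpos u _ := by simp only [Left.neg_nonpos_iff]; positivity
  deriv2_nonneg u _ := by positivity

/-! ### One-dimensional sums -/

lemma mem_Icc_neg_floor {s : ℝ} (hs : 0 ≤ s) {b : ℤ} :
    b ∈ Finset.Icc (-(⌊s⌋₊ : ℤ)) ⌊s⌋₊ ↔ (b : ℝ) ^ 2 ≤ s ^ 2 := by
  have hnat : b ∈ Finset.Icc (-(⌊s⌋₊ : ℤ)) ⌊s⌋₊ ↔ b.natAbs ≤ ⌊s⌋₊ := by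
    rw [Finset.mem_Icc]
    lia
  rw [hnat, Nat.le_floor_iff hs, sq_le_sq, abs_of_nonneg hs, Nat.cast_natAbs, Int.cast_abs]

lemma sum_Icc_neg_sub_sq (k : ℕ) (t : ℝ) :
    ∑ b ∈ Finset.Icc (-(k : ℤ)) k, (t - (b : ℝ) ^ 2) =
      (2 * k + 1) * t - k * (k + 1) * (2 * k + 1) / 3 := by
  induction k with
  | zero => simp
  | succ k ih =>
    have hsplit : Finset.Icc (-((k + 1 : ℕ) : ℤ)) ((k + 1 : ℕ) : ℤ) =
        insert (-((k : ℤ) + 1)) (insert ((k : ℤ) + 1) (Finset.Icc (-(k : ℤ)) k)) := by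
      ext b
      simp only [Finset.mem_Icc, Finset.mem_insert]
      lia
    rw [hsplit, Finset.sum_insert (by simp; lia), Finset.sum_insert (by simp), ih]
    push_cast
    ring

lemma sum_Icc_neg_max_sub_sq {N : ℕ} {s : ℝ} (hs : 0 ≤ s) (hN : s ≤ N) :
    ∑ b ∈ Finset.Icc (-(N : ℤ)) N, max (s ^ 2 - (b : ℝ) ^ 2) 0 =
      ∑ b ∈ Finset.Icc (-(⌊s⌋₊ : ℤ)) ⌊s⌋₊, (s ^ 2 - (b : ℝ) ^ 2) := by
  have hfloor : ⌊s⌋₊ ≤ N := Nat.floor_le_of_le hN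
  rw [← Finset.sum_subset (Finset.Icc_subset_Icc (by lia) (by lia) :
    Finset.Icc (-(⌊s⌋₊ : ℤ)) ⌊s⌋₊ ⊆ Finset.Icc (-(N : ℤ)) N)]
  · refine Finset.sum_congr rfl fun b hb ↦ max_eq_left (sub_nonneg.2 ?_)
    exact (mem_Icc_neg_floor hs).1 hb
  · intro b _ hb
    rw [mem_Icc_neg_floor hs, not_le] at hb
    exact max_eq_right (sub_nonpos.2 hb.le)

/- With `k = s + d - 1 / 2` the difference is
`s * (1 / 6 - 2 * d ^ 2) + 2 / 3 * (d * (1 / 4 - d ^ 2))`. -/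
lemma abs_cubic_sub_le {s k : ℝ} (hs : 0 ≤ s) (hks : k ≤ s) (hsk : s ≤ k + 1) :
    |(2 * k + 1) * s ^ 2 - k * (k + 1) * (2 * k + 1) / 3 - 4 / 3 * s ^ 3| ≤ s + 1 := by
  obtain ⟨d, rfl⟩ : ∃ d, k = s + d - 1 / 2 := ⟨k + 1 / 2 - s, by ring⟩
  have hd : |d| ≤ 1 / 2 := abs_le.2 ⟨by linarith, by linarith⟩
  have hd_sq : d ^ 2 ≤ 1 / 4 := by nlinarith [sq_abs d, abs_nonneg d]
  have hlinear : |1 / 6 - 2 * d ^ 2| ≤ 1 := abs_le.2 ⟨by linarith, by linarith [sq_nonneg d]⟩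
  have hquarter : |1 / 4 - d ^ 2| ≤ 1 := abs_le.2 ⟨by linarith, by linarith [sq_nonneg d]⟩
  calc _ = |s * (1 / 6 - 2 * d ^ 2) + 2 / 3 * (d * (1 / 4 - d ^ 2))| := by ring_nf
    _ ≤ s * |1 / 6 - 2 * d ^ 2| + 2 / 3 * (|d| * |1 / 4 - d ^ 2|) := by
      refine (abs_add_le _ _).trans_eq ?_
      rw [abs_mul, abs_mul, abs_mul, abs_of_nonneg hs, abs_of_pos (by norm_num : (0 : ℝ) < 2 / 3)]
    _ ≤ s * 1 + 2 / 3 * (1 / 2 * 1) := by gcongr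
    _ ≤ s + 1 := by linarith

lemma abs_sum_Icc_riesz_sub_le {N : ℕ} {t : ℝ} (ht : t ≤ (N : ℝ) ^ 2) :
    |∑ b ∈ Finset.Icc (-(N : ℤ)) N, max (t - (b : ℝ) ^ 2) 0 - 4 / 3 * √t ^ 3| ≤ √t + 1 := by
  rcases le_total t 0 with h0 | h0
  · rw [sqrt_eq_zero_of_nonpos h0, Finset.sum_eq_zero fun b _ ↦
      max_eq_right (by linarith [sq_nonneg (b : ℝ)])]
    norm_num
  have hsN : √t ≤ N := sqrt_le_left (Nat.cast_nonneg N) |>.2 ht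
  have hsum := sum_Icc_neg_max_sub_sq (sqrt_nonneg t) hsN
  rw [sq_sqrt h0] at hsum
  have hcubic := abs_cubic_sub_le (sqrt_nonneg t) (Nat.floor_le (sqrt_nonneg t))
    (Nat.lt_floor_add_one √t).le
  rwa [hsum, sum_Icc_neg_sub_sq, ← sq_sqrt h0, sqrt_sq (sqrt_nonneg t)]

lemma integral_rpow_mul_one_sub_rpow {α β : ℝ} (hα : 0 < α) (hβ : 0 < β) :
    ∫ s in (0 : ℝ)..1, s ^ (α - 1) * (1 - s) ^ (β - 1) = ProbabilityTheory.beta α β := by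
  have hcast : Complex.betaIntegral α β =
      ((∫ s in (0 : ℝ)..1, s ^ (α - 1) * (1 - s) ^ (β - 1) : ℝ) : ℂ) := by
    rw [Complex.betaIntegral, ← intervalIntegral.integral_ofReal]
    refine intervalIntegral.integral_congr fun s hs ↦ ?_
    rw [uIcc_of_le zero_le_one] at hs
    simp [Complex.ofReal_cpow hs.1, Complex.ofReal_cpow (sub_nonneg.2 hs.2)]
  rw [ProbabilityTheory.beta_eq_betaIntegralReal α β hα hβ, hcast, Complex.ofReal_re]

lemma beta_five_halves_one_half : ProbabilityTheory.beta (5 / 2) (1 / 2) = 3 * π / 8 := by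
  have hGamma : Gamma (5 / 2) = 3 / 4 * √π := by
    rw [show (5 / 2 : ℝ) = 1 / 2 + 1 + 1 by norm_num, Gamma_add_one (by norm_num),
      Gamma_add_one (by norm_num), Gamma_one_half_eq]
    ring
  rw [ProbabilityTheory.beta, hGamma, Gamma_one_half_eq, mul_assoc, mul_self_sqrt pi_pos.le,
    show (5 / 2 + 1 / 2 : ℝ) = 2 + 1 by norm_num, Gamma_add_one two_ne_zero, Gamma_two]
  ring

lemma integral_sqrt_pow_three_div_sqrt_one_sub :
    ∫ s in (0 : ℝ)..1, √s ^ 3 / √(1 - s) = 3 * π / 8 := by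
  rw [← beta_five_halves_one_half,
    ← integral_rpow_mul_one_sub_rpow (by norm_num) (by norm_num)]
  refine intervalIntegral.integral_congr fun s hs ↦ ?_
  rw [uIcc_of_le zero_le_one] at hs
  simp only [sqrt_eq_rpow, ← rpow_mul_natCast hs.1, div_eq_mul_inv,
    ← rpow_neg (sub_nonneg.2 hs.2)]
  norm_num

lemma abs_sum_sqrt_one_sub_pow_three_sub_le {N : ℕ} {T : ℝ} (hT : 0 < T) (hN : T ≤ (N : ℝ) ^ 2) :
    |∑ a ∈ Finset.Icc (-(N : ℤ)) N, √(1 - (a : ℝ) ^ 2 / T) ^ 3 - 3 * π / 8 * √T| ≤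
      3 / 2 * (√T + 1) / T := by
  have hintegral : ∫ s in (0 : ℝ)..1, 3 / 4 / √(1 - s) * (4 / 3 * √(s * T) ^ 3) =
      √T ^ 3 * (3 * π / 8) := by
    rw [← integral_sqrt_pow_three_div_sqrt_one_sub, ← intervalIntegral.integral_const_mul]
    congr with s
    rw [sqrt_mul' _ hT.le]
    ring
  have htransfer := convexKernel_sqrt_one_sub_pow_three.abs_sum_sub_integral_le
    (I := Finset.Icc (-(N : ℤ)) N) (m := fun a ↦ (a : ℝ) ^ 2) (fun _ _ ↦ sq_nonneg _) hT
    (M := fun t ↦ 4 / 3 * √t ^ 3) (by fun_prop) (D := √T + 1) fun t ht ↦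
      (abs_sum_Icc_riesz_sub_le (ht.2.trans hN)).trans (by gcongr; exact ht.2)
  have hmain : T⁻¹ * (√T ^ 3 * (3 * π / 8)) = 3 * π / 8 * √T := by
    rw [pow_succ, sq_sqrt hT.le]
    field_simp
  rw [hintegral, hmain] at htransfer
  refine htransfer.trans_eq ?_
  rw [sub_zero, sqrt_one]
  ring

lemma abs_sum_sqrt_sub_pow_three_sub_le {N : ℕ} {T : ℝ} (hT : 0 ≤ T) (hN : T ≤ (N : ℝ) ^ 2) :
    |∑ a ∈ Finset.Icc (-(N : ℤ)) N, √(T - (a : ℝ) ^ 2) ^ 3 - 3 * π / 8 * T ^ 2| ≤ 3 * (T + 1) := by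
  rcases hT.eq_or_lt with rfl | hT
  · have hzero (a : ℤ) : √(0 - (a : ℝ) ^ 2) = 0 :=
      sqrt_eq_zero_of_nonpos (by linarith [sq_nonneg (a : ℝ)])
    simp only [hzero]
    norm_num
  have hscale (a : ℤ) : √(T - (a : ℝ) ^ 2) ^ 3 = √T ^ 3 * √(1 - (a : ℝ) ^ 2 / T) ^ 3 := by
    rw [← mul_pow, ← sqrt_mul hT.le, mul_sub, mul_one, mul_div_cancel₀ _ hT.ne']
  have hsq : √T ^ 2 = T := sq_sqrt hT.le
  have hfactor : ∑ a ∈ Finset.Icc (-(N : ℤ)) N, √(T - (a : ℝ) ^ 2) ^ 3 - 3 * π / 8 * T ^ 2 =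
      √T ^ 3 * (∑ a ∈ Finset.Icc (-(N : ℤ)) N, √(1 - (a : ℝ) ^ 2 / T) ^ 3 -
        3 * π / 8 * √T) := by
    rw [mul_sub, Finset.mul_sum, Finset.sum_congr rfl fun a _ ↦ hscale a]
    linear_combination 3 * π / 8 * (√T ^ 2 + T) * hsq
  rw [hfactor, abs_mul, abs_of_pos (by positivity)]
  calc √T ^ 3 * |∑ a ∈ Finset.Icc (-(N : ℤ)) N, √(1 - (a : ℝ) ^ 2 / T) ^ 3 - 3 * π / 8 * √T|
      ≤ √T ^ 3 * (3 / 2 * (√T + 1) / T) := by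
        gcongr
        exact abs_sum_sqrt_one_sub_pow_three_sub_le hT hN
    _ = 3 / 2 * (T + √T) := by
        rw [pow_succ, hsq]
        field_simp
        linear_combination hsq
    _ ≤ 3 * (T + 1) := by nlinarith [sq_nonneg (√T - 1)]

/-! ### Sums over the square lattice -/

/-- The squared Euclidean length of an integer vector, as a natural number, so that `r2 m` counts
the vectors of squared length `m`. -/
def normSq (p : ℤ × ℤ) : ℕ := p.1.natAbs ^ 2 + p.2.natAbs ^ 2

/-- The integer points of the square `[-N, N] × [-N, N]`: a finite window for lattice sums whose
terms vanish outside a disk of radius `N`. -/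
noncomputable def latticeBox (N : ℕ) : Finset (ℤ × ℤ) :=
  Finset.Icc (-(N : ℤ)) N ×ˢ Finset.Icc (-(N : ℤ)) N

lemma cast_normSq (p : ℤ × ℤ) : (normSq p : ℝ) = (p.1 : ℝ) ^ 2 + (p.2 : ℝ) ^ 2 := by
  simp [normSq, Nat.cast_natAbs]

lemma mem_latticeBox_of_normSq_le {N : ℕ} {p : ℤ × ℤ} (h : normSq p ≤ N ^ 2) :
    p ∈ latticeBox N := by
  have h1 : p.1.natAbs ≤ N := (Nat.pow_le_pow_iff_left two_ne_zero).1 (le_self_add.trans h)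
  have h2 : p.2.natAbs ≤ N := (Nat.pow_le_pow_iff_left two_ne_zero).1 (le_add_self.trans h)
  simp only [latticeBox, Finset.mem_product, Finset.mem_Icc]
  lia

lemma card_Icc_neg (N : ℕ) : (Finset.Icc (-(N : ℤ)) N).card = 2 * N + 1 := by
  rw [Int.card_Icc]
  lia

lemma card_latticeBox (N : ℕ) : (latticeBox N).card = (2 * N + 1) ^ 2 := by
  rw [latticeBox, Finset.card_product, card_Icc_neg, sq]

lemma abs_sum_latticeBox_riesz_sub_le {N : ℕ} {T : ℝ} (hT : 0 ≤ T) (hN : T ≤ (N : ℝ) ^ 2) :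
    |∑ p ∈ latticeBox N, max (T - (normSq p : ℝ)) 0 - π / 2 * T ^ 2| ≤
      6 * ((N : ℝ) + 1) ^ 2 := by
  have hsqrt : √T ≤ N := sqrt_le_left (Nat.cast_nonneg N) |>.2 hN
  have hinner : |∑ a ∈ Finset.Icc (-(N : ℤ)) N, (∑ b ∈ Finset.Icc (-(N : ℤ)) N,
      max (T - (a : ℝ) ^ 2 - (b : ℝ) ^ 2) 0 - 4 / 3 * √(T - (a : ℝ) ^ 2) ^ 3)| ≤
        (2 * (N : ℝ) + 1) * (N + 1) := by
    refine (Finset.abs_sum_le_sum_abs _ _).trans ((Finset.sum_le_card_nsmul _ _ (N + 1 : ℝ)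
      fun a _ ↦ ?_).trans_eq (by simp only [card_Icc_neg, nsmul_eq_mul]; push_cast; rfl))
    have ha : T - (a : ℝ) ^ 2 ≤ T := sub_le_self T (sq_nonneg _)
    exact (abs_sum_Icc_riesz_sub_le (ha.trans hN)).trans (by grw [ha, hsqrt])
  have houter := abs_sum_sqrt_sub_pow_three_sub_le hT hN
  have hsplit : ∑ p ∈ latticeBox N, max (T - (normSq p : ℝ)) 0 - π / 2 * T ^ 2 =
      ∑ a ∈ Finset.Icc (-(N : ℤ)) N, (∑ b ∈ Finset.Icc (-(N : ℤ)) N,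
        max (T - (a : ℝ) ^ 2 - (b : ℝ) ^ 2) 0 - 4 / 3 * √(T - (a : ℝ) ^ 2) ^ 3) +
      4 / 3 * (∑ a ∈ Finset.Icc (-(N : ℤ)) N, √(T - (a : ℝ) ^ 2) ^ 3 - 3 * π / 8 * T ^ 2) := by
    rw [latticeBox, Finset.sum_product, Finset.sum_sub_distrib, ← Finset.mul_sum]
    simp only [cast_normSq, sub_sub]
    ring
  rw [hsplit]
  calc _ ≤ (2 * N + 1 : ℝ) * (N + 1) + 4 / 3 * (3 * (T + 1)) := by
        refine (abs_add_le _ _).trans (add_le_add hinner ?_)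
        rw [abs_mul, abs_of_pos (by norm_num : (0 : ℝ) < 4 / 3)]
        gcongr
    _ ≤ 6 * (N + 1) ^ 2 := by nlinarith

lemma ConvexKernel.abs_sum_latticeBox_sub_le {k k' k'' : ℝ → ℝ} (hk : ConvexKernel k k' k'')
    {N : ℕ} {R : ℝ} (hR : 0 < R) (hN : R ≤ (N : ℝ) ^ 2) :
    |∑ p ∈ latticeBox N, k (normSq p / R) - π * R * ∫ u in (0 : ℝ)..1, k u| ≤
      6 * (N + 1) ^ 2 / R * -k' 0 := by
  have htransfer := hk.abs_sum_sub_integral_le (I := latticeBox N) (m := fun p ↦ (normSq p : ℝ))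
    (fun _ _ ↦ Nat.cast_nonneg _) hR (M := fun t ↦ π / 2 * t ^ 2) (by fun_prop) fun T hT ↦
      abs_sum_latticeBox_riesz_sub_le hT.1 (hT.2.trans hN)
  have hintegral : ∫ s in (0 : ℝ)..1, k'' s * (π / 2 * (s * R) ^ 2) =
      π * R ^ 2 * ∫ u in (0 : ℝ)..1, k u := by
    rw [show π * R ^ 2 * ∫ u in (0 : ℝ)..1, k u =
        π / 2 * R ^ 2 * (2 * ∫ u in (0 : ℝ)..1, k u) by ring,
      ← hk.integral_deriv2_mul_sq, ← intervalIntegral.integral_const_mul]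
    congr with s
    ring
  convert htransfer using 3
  rw [hintegral]
  field_simp

/-- The kernel `g` for which the summands of `S(√x; 0)` and of `∑ √(x - |p|⁴)` differ by
`√x * g (|p|² / √x)`. -/
noncomputable def defectKernel (u : ℝ) : ℝ := √2 * √(1 - u) - √(1 - u ^ 2)

lemma sqrt_one_sub_sq {u : ℝ} (hu : 0 ≤ 1 + u) : √(1 - u ^ 2) = √(1 - u) * √(1 + u) := by
  rw [← sqrt_mul' _ hu]
  ring_nf

lemma defectKernel_eq {u : ℝ} (hu : 0 ≤ u) :
    defectKernel u = √(1 - u) ^ 3 * (√2 + √(1 + u))⁻¹ := by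
  rw [defectKernel, sqrt_one_sub_sq (by linarith), ← div_eq_mul_inv, eq_div_iff (by positivity)]
  rcases le_total u 1 with h | h
  · linear_combination √(1 - u) * (sq_sqrt zero_le_two - sq_sqrt (by linarith : 0 ≤ 1 + u) -
      sq_sqrt (sub_nonneg.2 h))
  · simp [sqrt_eq_zero_of_nonpos (sub_nonpos.2 h)]

lemma integral_sqrt_one_sub : ∫ u in (0 : ℝ)..1, √(1 - u) = 2 / 3 := by
  rw [intervalIntegral.integral_comp_sub_left (fun u ↦ √u)]
  simp only [sqrt_eq_rpow, sub_self, sub_zero]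
  rw [integral_rpow (by norm_num)]
  norm_num

lemma integral_zero_one_sqrt_one_sub_sq : ∫ u in (0 : ℝ)..1, √(1 - u ^ 2) = π / 4 := by
  have hint (a b : ℝ) : IntervalIntegrable (fun u ↦ √(1 - u ^ 2)) volume a b :=
    Continuous.intervalIntegrable (by fun_prop) a b
  have hfull := integral_sqrt_one_sub_sq
  have heven := intervalIntegral.integral_comp_neg (a := 0) (b := 1) fun u : ℝ ↦ √(1 - u ^ 2)
  rw [← intervalIntegral.integral_add_adjacent_intervals (hint (-1) 0) (hint 0 1)] at hfull
  simp only [even_two.neg_pow, neg_zero] at heven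
  linarith

lemma integral_defectKernel : ∫ u in (0 : ℝ)..1, defectKernel u = 2 * √2 / 3 - π / 4 := by
  simp only [defectKernel]
  rw [intervalIntegral.integral_sub (Continuous.intervalIntegrable (by fun_prop) _ _)
    (Continuous.intervalIntegrable (by fun_prop) _ _), intervalIntegral.integral_const_mul,
    integral_sqrt_one_sub, integral_zero_one_sqrt_one_sub_sq]
  ring

lemma abs_sum_defectKernel_sub_le {N : ℕ} {R : ℝ} (hR : 0 < R) (hN : R ≤ (N : ℝ) ^ 2) :
    |∑ p ∈ latticeBox N, defectKernel (normSq p / R) - π * R * (2 * √2 / 3 - π / 4)| ≤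
      6 * (N + 1) ^ 2 / R := by
  have hsum : ∑ p ∈ latticeBox N, defectKernel (normSq p / R) = ∑ p ∈ latticeBox N,
      √(1 - normSq p / R) ^ 3 * (√2 + √(1 + normSq p / R))⁻¹ :=
    Finset.sum_congr rfl fun p _ ↦ defectKernel_eq (by positivity)
  have hintegral : ∫ u in (0 : ℝ)..1, √(1 - u) ^ 3 * (√2 + √(1 + u))⁻¹ =
      2 * √2 / 3 - π / 4 := by
    rw [← integral_defectKernel]
    refine intervalIntegral.integral_congr fun u hu ↦ (defectKernel_eq ?_).symm
    exact (uIcc_of_le (zero_le_one' ℝ) ▸ hu).1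
  have hsqrt : 1 ≤ √2 := one_le_sqrt.2 one_le_two
  have hslope : 3 / 2 * (√2 + 1)⁻¹ + (2 * (√2 + 1) ^ 2)⁻¹ ≤ 1 := by
    calc 3 / 2 * (√2 + 1)⁻¹ + (2 * (√2 + 1) ^ 2)⁻¹
        ≤ 3 / 2 * (1 + 1)⁻¹ + (2 * (1 + 1) ^ 2)⁻¹ := by gcongr
      _ ≤ 1 := by norm_num
  have hkernel := convexKernel_sqrt_one_sub_pow_three.mul
    convexAntitone_inv_sqrt_two_add_sqrt_one_add
  rw [hsum, ← hintegral]
  refine (hkernel.abs_sum_latticeBox_sub_le hR hN).trans (mul_le_of_le_one_right ?_ ?_)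
  · positivity
  · simp only [sub_zero, add_zero, sqrt_one, one_pow, one_mul, mul_one]
    linarith

/-! ### Counting integer points -/

lemma mem_Ioo_neg_ceil_sqrt {y : ℝ} {w : ℤ} :
    w ∈ Finset.Ioo (-⌈√y⌉) ⌈√y⌉ ↔ (w : ℝ) ^ 2 < y := by
  rw [Finset.mem_Ioo, Real.sq_lt, neg_lt (b := w), Int.lt_ceil, Int.lt_ceil, Int.cast_neg, neg_lt]

lemma abs_card_Ioo_neg_ceil_sqrt_sub_le (y : ℝ) :
    |((Finset.Ioo (-⌈√y⌉) ⌈√y⌉).card : ℝ) - 2 * √y| ≤ 1 := by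
  rcases (sqrt_nonneg y).eq_or_lt with h0 | hpos
  · simp [← h0]
  have hcard : ((Finset.Ioo (-⌈√y⌉) ⌈√y⌉).card : ℤ) = 2 * ⌈√y⌉ - 1 := by
    have := Int.ceil_pos.2 hpos
    rw [Int.card_Ioo]
    lia
  have hcard' : ((Finset.Ioo (-⌈√y⌉) ⌈√y⌉).card : ℝ) = 2 * ⌈√y⌉ - 1 := mod_cast hcard
  rw [hcard', abs_le]
  constructor <;> linarith [Int.le_ceil √y, Int.ceil_lt_add_one √y]

lemma S_eq_sum_card {N : ℕ} {x : ℝ} (hN : x ≤ (N : ℝ) ^ 4) :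
    S x = ∑ p ∈ latticeBox N,
      (Finset.Ioo (-⌈√(x - (normSq p : ℝ) ^ 2)⌉) ⌈√(x - (normSq p : ℝ) ^ 2)⌉).card := by
  have hset : {q : ℤ × ℤ × ℤ | ((q.1 : ℝ) ^ 2 + (q.2.1 : ℝ) ^ 2) ^ 2 + (q.2.2 : ℝ) ^ 2 < x} =
      ((latticeBox N).sigma fun p ↦ Finset.Ioo (-⌈√(x - (normSq p : ℝ) ^ 2)⌉)
        ⌈√(x - (normSq p : ℝ) ^ 2)⌉).map
          ((Equiv.sigmaEquivProd (ℤ × ℤ) ℤ).trans (Equiv.prodAssoc ℤ ℤ ℤ)).toEmbedding := by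
    ext ⟨a, b, w⟩
    rw [Finset.mem_coe, Finset.mem_map_equiv]
    simp only [Equiv.symm_trans_apply, Equiv.prodAssoc_symm_apply, Equiv.sigmaEquivProd_symm_apply,
      Finset.mem_sigma, mem_Ioo_neg_ceil_sqrt, mem_ofPred_eq, lt_sub_iff_add_lt', cast_normSq]
    refine ⟨fun h ↦ ⟨mem_latticeBox_of_normSq_le ?_, h⟩, fun h ↦ h.2⟩
    have hsq : (normSq (a, b) : ℝ) ^ 2 ≤ ((N : ℝ) ^ 2) ^ 2 := by
      rw [cast_normSq]
      nlinarith [sq_nonneg (w : ℝ)]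
    exact_mod_cast le_of_sq_le_sq hsq (by positivity)
  rw [S, hset, ncard_coe_finset, Finset.card_map, Finset.card_sigma]

lemma abs_S_sub_sum_sqrt_le {N : ℕ} {x : ℝ} (hN : x ≤ (N : ℝ) ^ 4) :
    |S x - 2 * ∑ p ∈ latticeBox N, √(x - (normSq p : ℝ) ^ 2)| ≤ (2 * N + 1) ^ 2 := by
  rw [S_eq_sum_card hN, Nat.cast_sum, Finset.mul_sum, ← Finset.sum_sub_distrib]
  refine (Finset.abs_sum_le_sum_abs _ _).trans ((Finset.sum_le_card_nsmul _ _ 1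
    fun p _ ↦ abs_card_Ioo_neg_ceil_sqrt_sub_le _).trans_eq ?_)
  simp [card_latticeBox]

lemma r2_eq_card {N m : ℕ} (hm : m ≤ N ^ 2) :
    r2 m = ((latticeBox N).filter fun p ↦ normSq p = m).card := by
  rw [r2, ← ncard_coe_finset]
  congr 1
  ext p
  have hnormSq : p.1 ^ 2 + p.2 ^ 2 = (m : ℤ) ↔ normSq p = m := by
    rw [← Nat.cast_inj (R := ℤ)]
    simp [normSq]
  rw [mem_ofPred_eq, hnormSq, Finset.mem_coe, Finset.mem_filter]
  exact ⟨fun h ↦ ⟨mem_latticeBox_of_normSq_le (h.trans_le hm), h⟩, fun h ↦ h.2⟩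

lemma sum_r2_mul {N n : ℕ} (hn : n ≤ N ^ 2) (f : ℕ → ℝ) :
    ∑ m ∈ Finset.range (n + 1), r2 m * f m =
      ∑ p ∈ latticeBox N with normSq p ≤ n, f (normSq p) := by
  rw [← Finset.sum_fiberwise_of_maps_to (g := normSq) (t := Finset.range (n + 1))
    fun p hp ↦ Finset.mem_range_succ_iff.2 (Finset.mem_filter.1 hp).2]
  refine Finset.sum_congr rfl fun m hm ↦ ?_
  have hmn : m ≤ n := Finset.mem_range_succ_iff.1 hm
  have hfilter : {p ∈ latticeBox N | normSq p ≤ n ∧ normSq p = m} =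
      {p ∈ latticeBox N | normSq p = m} :=
    Finset.filter_congr fun p _ ↦ and_iff_right_of_imp fun h ↦ h.trans_le hmn
  rw [Finset.filter_filter, hfilter, r2_eq_card (hmn.trans hn), ← nsmul_eq_mul,
    ← Finset.sum_const]
  exact Finset.sum_congr rfl fun p hp ↦ by rw [(Finset.mem_filter.1 hp).2]

lemma Sx0_eq_sum_latticeBox {N : ℕ} {x : ℝ} (hx : 0 ≤ x) (hN : √x ≤ (N : ℝ) ^ 2) :
    Sx0 x = √2 * √√x * ∑ p ∈ latticeBox N, √(√x - normSq p) := by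
  have hfloor : ⌊√x⌋₊ ≤ N ^ 2 := Nat.floor_le_of_le (mod_cast hN)
  have hroot : x ^ ((1 : ℝ) / 4) = √√x := by
    rw [sqrt_eq_rpow, sqrt_eq_rpow, ← rpow_mul hx]
    norm_num
  rw [Sx0, hroot, sum_r2_mul hfloor fun m ↦ (√x - m) ^ ((1 : ℝ) / 2)]
  simp only [← sqrt_eq_rpow]
  congr 1
  refine Finset.sum_filter_of_ne fun p _ hp ↦ Nat.le_floor (le_of_not_gt fun hlt ↦ hp ?_)
  exact sqrt_eq_zero_of_nonpos (sub_nonpos.2 hlt.le)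

lemma mul_defectKernel_div {R : ℝ} (hR : 0 < R) (m : ℝ) :
    R * defectKernel (m / R) = √2 * √R * √(R - m) - √(R ^ 2 - m ^ 2) := by
  have hlin : √(R - m) = √R * √(1 - m / R) := by
    rw [← sqrt_mul hR.le, mul_sub, mul_one, mul_div_cancel₀ _ hR.ne']
  have hquad : √(R ^ 2 - m ^ 2) = R * √(1 - (m / R) ^ 2) := by
    rw [← sqrt_sq hR.le, ← sqrt_mul (sq_nonneg R), sqrt_sq hR.le]
    congr 1
    field_simp
  rw [hlin, hquad, defectKernel]
  linear_combination -√2 * √(1 - m / R) * sq_sqrt hR.le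

lemma Sx0_sub_sum_sqrt_eq {N : ℕ} {x : ℝ} (hx : 0 < x) (hN : √x ≤ (N : ℝ) ^ 2) :
    Sx0 x - ∑ p ∈ latticeBox N, √(x - (normSq p : ℝ) ^ 2) =
      √x * ∑ p ∈ latticeBox N, defectKernel (normSq p / √x) := by
  simp only [Sx0_eq_sum_latticeBox hx.le hN, Finset.mul_sum, ← Finset.sum_sub_distrib,
    mul_defectKernel_div (sqrt_pos.2 hx), sq_sqrt hx.le]

lemma two_mul_rpow_mul_Q {x : ℝ} (hx : 0 < x) :
    2 * x ^ ((1 : ℝ) / 2) * Q x = 2 * Sx0 x - 4 * √2 * π / 3 * x := by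
  have hcancel : x ^ ((1 : ℝ) / 2) * x ^ (-(1 : ℝ) / 2) = 1 := by
    rw [← rpow_add hx]
    norm_num
  have htwo : (2 : ℝ) ^ ((3 : ℝ) / 2) = 2 * √2 := by
    rw [show (3 : ℝ) / 2 = 1 + 1 / 2 by norm_num, rpow_add two_pos, rpow_one, ← sqrt_eq_rpow]
  rw [Q, htwo]
  linear_combination 2 * (Sx0 x - 2 * √2 * π / 3 * x) * hcancel

lemma E_sub_two_mul_rpow_mul_Q_eq {N : ℕ} {x : ℝ} (hx : 0 < x) (hN : √x ≤ (N : ℝ) ^ 2) :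
    E x - 2 * x ^ ((1 : ℝ) / 2) * Q x =
      (S x - 2 * ∑ p ∈ latticeBox N, √(x - (normSq p : ℝ) ^ 2)) -
        2 * √x * (∑ p ∈ latticeBox N, defectKernel (normSq p / √x) -
          π * √x * (2 * √2 / 3 - π / 4)) := by
  rw [two_mul_rpow_mul_Q hx, E]
  linear_combination -2 * Sx0_sub_sum_sqrt_eq hx hN -
    2 * π * (2 * √2 / 3 - π / 4) * sq_sqrt hx.le

lemma exists_nat_le_sq_and_le {R : ℝ} (hR : 1 ≤ R) :
    ∃ N : ℕ, R ≤ (N : ℝ) ^ 2 ∧ ((N : ℝ) + 1) ^ 2 ≤ 9 * R := by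
  have hsqrt : 1 ≤ √R := one_le_sqrt.2 hR
  have hsq : √R ^ 2 = R := sq_sqrt (zero_le_one.trans hR)
  refine ⟨⌈√R⌉₊, (sqrt_le_left (Nat.cast_nonneg _)).1 (Nat.le_ceil _), ?_⟩
  calc ((⌈√R⌉₊ : ℝ) + 1) ^ 2 ≤ (3 * √R) ^ 2 := by
        gcongr
        linarith [Nat.ceil_lt_add_one (sqrt_nonneg R)]
    _ = 9 * R := by rw [mul_pow, hsq]; norm_num

/-- There are `C > 0` and `x₀ ≥ 1` such that for all `x ≥ x₀`,
`|E(x) − 2·x^{1/2}·Q(√x)| ≤ C·x^{1/2}`. -/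
theorem E_approx_Q :
    ∃ C : ℝ, 0 < C ∧ ∃ x₀ : ℝ, 1 ≤ x₀ ∧ ∀ x : ℝ, x₀ ≤ x →
      |E x - 2 * x ^ ((1 : ℝ) / 2) * Q x| ≤ C * x ^ ((1 : ℝ) / 2) := by
  refine ⟨144, by norm_num, 1, le_rfl, fun x hx ↦ ?_⟩
  have hx0 : 0 < x := one_pos.trans_le hx
  have hR : 0 < √x := sqrt_pos.2 hx0
  obtain ⟨N, hN, hN_le⟩ := exists_nat_le_sq_and_le (one_le_sqrt.2 hx)
  have hxN : x ≤ (N : ℝ) ^ 4 := by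
    rw [← sq_sqrt hx0.le, show (N : ℝ) ^ 4 = ((N : ℝ) ^ 2) ^ 2 by ring]
    gcongr
  rw [E_sub_two_mul_rpow_mul_Q_eq hx0 hN, ← sqrt_eq_rpow]
  calc _ ≤ (2 * (N : ℝ) + 1) ^ 2 + 2 * √x * (6 * (N + 1) ^ 2 / √x) := by
        refine (abs_sub _ _).trans (add_le_add (abs_S_sub_sum_sqrt_le hxN) ?_)
        rw [abs_mul, abs_of_pos (by positivity)]
        gcongr
        exact abs_sum_defectKernel_sub_le hR hN
    _ = (2 * (N : ℝ) + 1) ^ 2 + 12 * (N + 1) ^ 2 := by field_simp; ring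
    _ ≤ 16 * (N + 1) ^ 2 := by linarith [N.cast_nonneg (α := ℝ)]
    _ ≤ 144 * √x := by linarith
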